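/- Let q > 2, λ > 0, and let f : [0,∞) → ℝ be a twice continuously differentiable solution of the ODE f''(ξ) + λ|f'(ξ)|^q − (1/2)ξ f'(ξ) + ((q−2)/(2(q−1))) f(ξ) = 0 on [0,∞) with f(0) = −1 and f'(0) = 0, and define g(t) = e^{−t/(q−1)} f'(e^t). Then limsup_{t→∞} g(t) ≤ C₀, where C₀ = (1/(λq))^{1/(q−1)}. -/

import Mathlib

open Set Filter Topology Real

/-- `f` is a twice continuously differentiable solution, on the set `s`, of the
self-similar profile ODE `f'' + λ|f'|^q - (1/2)ξ f' + ((q-2)/(2(q-1))) f = 0`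
associated with the generalized deterministic KPZ equation. -/
def SolvesKPZProfile (q lam : ℝ) (s : Set ℝ) (f : ℝ → ℝ) : Prop :=
  ContDiffOn ℝ 2 f s ∧
  ∀ ξ ∈ s,
    derivWithin (derivWithin f s) s ξ + lam * |derivWithin f s ξ| ^ q
      - (1 / 2) * ξ * derivWithin f s ξ + ((q - 2) / (2 * (q - 1))) * f ξ = 0

/-- The function `g(t) = e^{-t/(q-1)} f'(e^t)`, i.e. the profile derivative in the
variables `f'(ξ) = ξ^{1/(q-1)} g(t)`, `ξ = e^t`. -/
noncomputable def kpzG (q : ℝ) (f : ℝ → ℝ) : ℝ → ℝ :=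
  fun t => Real.exp (-t / (q - 1)) * derivWithin f (Set.Ici 0) (Real.exp t)

/-!
Write `W = f'`, `V = f''`, `α = 1 / (q - 1)`. Differentiating the equation gives
`V' = (ξ / 2 - λ q W ^ (q - 1)) V + (α / 2) W`, whence `V` and `W` stay positive. As long as
`W ≤ b ξ ^ α` with `b < C₀`, the coefficient of `V` is at least `-μ ξ` for some `μ < 1 / 2`. For
large `ξ` the quantity `V` is then fast, and `Q = W + θ V / ξ` is slow when `2 < θ` and `θ μ < 1`:
it satisfies `ξ Q' ≥ (θ α / 2) Q` with `θ α / 2 > α`. Since `W ≤ Q`, this holds whenever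
`Q ≤ b ξ ^ α`, which forces `Q ≥ b ξ ^ α` eventually. A lower bound on `Q` is weaker than one on
`W`, but the difference is invisible after integration because `V / ξ = (W / ξ)' + W / ξ ^ 2`; hence
`f ≥ (b - o(1)) ξ ^ (α + 1) / (α + 1)`. Finally `V > 0` turns a lower bound on `f` into an upper
bound on `λ W ^ q - ξ W / 2`, and bounding `λ W ^ q` below by its tangent line at `C₀ ξ ^ α` gives
`W ≤ (C₀ + o(1)) ξ ^ α`.
-/

section PowerComparison

lemma const_mul_rpow_le_of_hasDerivAt {u u' : ℝ → ℝ} {K γ X ξ : ℝ} (hX : 0 < X)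
    (hu : ∀ x ≥ X, HasDerivAt u (u' x) x) (hKX : K * X ^ γ ≤ u X)
    (h : ∀ x ≥ X, u x = K * x ^ γ → γ * u x < x * u' x) (hξ : X ≤ ξ) :
    K * ξ ^ γ ≤ u ξ := by
  have hpow : ∀ x ≥ X, HasDerivAt (fun x ↦ K * x ^ γ) (K * (γ * x ^ (γ - 1))) x := fun x hx ↦
    (hasDerivAt_rpow_const (Or.inl (hX.trans_le hx).ne')).const_mul K
  refine image_le_of_deriv_right_lt_deriv_boundary'
    (fun x hx ↦ (hpow x hx.1).continuousAt.continuousWithinAt)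
    (fun x hx ↦ (hpow x hx.1).hasDerivWithinAt) hKX
    (fun x hx ↦ (hu x hx.1).continuousAt.continuousWithinAt)
    (fun x hx ↦ (hu x hx.1).hasDerivWithinAt) (fun x hx heq ↦ ?_) (right_mem_Icc.2 hξ)
  have hx : 0 < x ∧ X ≤ x := ⟨hX.trans_le hx.1, hx.1⟩
  refine lt_of_mul_lt_mul_left ?_ hx.1.le
  calc x * (K * (γ * x ^ (γ - 1))) = γ * (K * x ^ γ) := by
        rw [rpow_sub_one hx.1.ne']; field_simp [hx.1.ne']
    _ = γ * u x := by rw [heq]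
    _ < x * u' x := h x hx.2 heq.symm

lemma eventually_const_mul_rpow_le_of_hasDerivAt {u u' : ℝ → ℝ} {b α β : ℝ} (hαβ : α < β)
    (hu : ∀ᶠ x in atTop, HasDerivAt u (u' x) x) (hpos : ∀ᶠ x in atTop, 0 < u x)
    (h : ∀ᶠ x in atTop, u x ≤ b * x ^ α → β * u x ≤ x * u' x) :
    ∀ᶠ x in atTop, b * x ^ α ≤ u x := by
  obtain ⟨X, hX⟩ := (((hu.and hpos).and h).and (eventually_gt_atTop 0)).exists_forall_of_atTop
  have hX0 : 0 < X := (hX X le_rfl).2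
  obtain ⟨x₁, hx₁, hbx₁⟩ : ∃ x ≥ X, b * x ^ α ≤ u x := by
    by_contra! hlt
    obtain ⟨γ, hαγ, hγβ⟩ := exists_between hαβ
    have hK : 0 < u X / X ^ γ := div_pos (hX X le_rfl).1.1.2 (rpow_pos_of_pos hX0 γ)
    have hgrowth : ∀ x ≥ X, u X / X ^ γ * x ^ γ ≤ u x := fun x hx ↦
      const_mul_rpow_le_of_hasDerivAt hX0 (fun y hy ↦ (hX y hy).1.1.1)
        (div_mul_cancel₀ _ (rpow_pos_of_pos hX0 γ).ne').le
        (fun y hy _ ↦ (mul_lt_mul_of_pos_right hγβ (hX y hy).1.1.2).trans_le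
          ((hX y hy).1.2 (hlt y hy).le)) hx
    have hdiv : Tendsto (fun x : ℝ ↦ u X / X ^ γ * x ^ (γ - α)) atTop atTop :=
      (tendsto_rpow_atTop (sub_pos.2 hαγ)).const_mul_atTop hK
    obtain ⟨x, hbx, hx⟩ := ((hdiv.eventually_ge_atTop b).and (eventually_ge_atTop X)).exists
    have hx0 : 0 < x := hX0.trans_le hx
    refine (hlt x hx).not_ge (le_trans ?_ (hgrowth x hx))
    calc b * x ^ α ≤ u X / X ^ γ * x ^ (γ - α) * x ^ α := by gcongr
      _ = u X / X ^ γ * x ^ γ := by rw [mul_assoc, ← rpow_add hx0, sub_add_cancel]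
  filter_upwards [eventually_ge_atTop x₁] with x hx
  exact const_mul_rpow_le_of_hasDerivAt (hX0.trans_le hx₁)
    (fun y hy ↦ (hX y (hx₁.trans hy)).1.1.1) hbx₁
    (fun y hy heq ↦ (mul_lt_mul_of_pos_right hαβ (hX y (hx₁.trans hy)).1.1.2).trans_le
      ((hX y (hx₁.trans hy)).1.2 heq.le)) hx

end PowerComparison

section Positivity

lemma exists_first_zero {v : ℝ → ℝ} {a b : ℝ} (hab : a ≤ b) (hv : ContinuousOn v (Icc a b))
    (ha : 0 < v a) (hb : v b ≤ 0) :
    ∃ u ∈ Ioc a b, v u = 0 ∧ ∀ x ∈ Ico a u, 0 < v x := by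
  have hzero : ∀ x ∈ Icc a b, v x ≤ 0 → ∃ z ∈ Icc a x, v z = 0 := fun x hx hvx ↦
    intermediate_value_Icc' hx.1 (hv.mono (Icc_subset_Icc_right hx.2)) ⟨hvx, ha.le⟩
  have hcompact : IsCompact (Icc a b ∩ v ⁻¹' {0}) :=
    isCompact_Icc.of_isClosed_subset
      (hv.preimage_isClosed_of_isClosed isClosed_Icc isClosed_singleton) inter_subset_left
  obtain ⟨u, ⟨hu, hvu⟩, hleast⟩ := hcompact.exists_isLeast
    (hzero b (right_mem_Icc.2 hab) hb)
  have hau : a ≠ u := by rintro rfl; exact ha.ne' hvu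
  refine ⟨u, ⟨hu.1.lt_of_ne hau, hu.2⟩, hvu, fun x hx ↦ ?_⟩
  by_contra! hvx
  obtain ⟨z, hz, hvz⟩ := hzero x ⟨hx.1, hx.2.le.trans hu.2⟩ hvx
  exact (hz.2.trans_lt hx.2).not_ge (hleast ⟨⟨hz.1, hz.2.trans (hx.2.le.trans hu.2)⟩, hvz⟩)

lemma pos_of_hasDerivAt_pos {W V : ℝ → ℝ} {ξ : ℝ} (hξ : 0 < ξ) (hWc : ContinuousOn W (Ici 0))
    (hW : ∀ x > 0, HasDerivAt W (V x) x) (hW0 : 0 ≤ W 0) (hV : ∀ x ∈ Ioo 0 ξ, 0 < V x) :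
    0 < W ξ := by
  have hmono : StrictMonoOn W (Icc 0 ξ) :=
    strictMonoOn_of_hasDerivWithinAt_pos (convex_Icc 0 ξ) (hWc.mono Icc_subset_Ici_self)
      (fun x hx ↦ (hW x (interior_Icc (a := (0 : ℝ)) ▸ hx).1).hasDerivWithinAt)
      (fun x hx ↦ hV x (interior_Icc (a := (0 : ℝ)) ▸ hx))
  exact hW0.trans_lt (hmono (left_mem_Icc.2 hξ.le) (right_mem_Icc.2 hξ.le) hξ)

lemma pos_of_deriv_pos_of_eq_zero {W V : ℝ → ℝ}
    (hWc : ContinuousOn W (Ici 0)) (hVc : ContinuousOn V (Ici 0))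
    (hW : ∀ x > 0, HasDerivAt W (V x) x) (hW0 : 0 ≤ W 0) (hV0 : 0 < V 0)
    (hV : ∀ x > 0, 0 < W x → V x = 0 → 0 < deriv V x) {ξ : ℝ} (hξ : 0 ≤ ξ) :
    0 < V ξ := by
  by_contra! hneg
  obtain ⟨u, hu, hVu, hpos⟩ := exists_first_zero hξ (hVc.mono Icc_subset_Ici_self) hV0 hneg
  have hWu : 0 < W u :=
    pos_of_hasDerivAt_pos hu.1 hWc hW hW0 fun x hx ↦ hpos x (Ioo_subset_Ico_self hx)
  have hsign : ∀ᶠ x in 𝓝[<] u, SignType.sign (V x) = SignType.sign (x - u) :=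
    (eventually_nhdsWithin_sign_eq_of_deriv_pos (hV u hu.1 hWu hVu) hVu).filter_mono
      nhdsWithin_le_nhds
  obtain ⟨x, hx, hxu⟩ := (hsign.and (Ico_mem_nhdsLT hu.1)).exists
  rw [sign_pos (hpos x hxu), sign_neg (sub_neg.2 hxu.2)] at hx
  exact absurd hx (by decide)

lemma tendsto_atTop_of_const_le_hasDerivAt {f W : ℝ → ℝ} {m X : ℝ} (hm : 0 < m)
    (hf : ∀ x ≥ X, HasDerivAt f (W x) x) (hW : ∀ x ≥ X, m ≤ W x) :
    Tendsto f atTop atTop := by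
  have hlin : Tendsto (fun x ↦ f X + m * (x - X)) atTop atTop :=
    tendsto_atTop_add_const_left _ _
      ((tendsto_atTop_add_const_right _ (-X) tendsto_id).const_mul_atTop hm)
  refine tendsto_atTop_mono' _ ?_ hlin
  filter_upwards [eventually_ge_atTop X] with x hx
  have hmvt := (convex_Ici X).mul_sub_le_image_sub_of_le_deriv
    (fun y hy ↦ (hf y hy).continuousAt.continuousWithinAt)
    (fun y hy ↦ (hf y (interior_subset hy)).differentiableAt.differentiableWithinAt)
    (fun y hy ↦ (hf y (interior_subset hy)).deriv ▸ hW y (interior_subset hy))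
    X self_mem_Ici x hx hx
  linarith

end Positivity

section SlowVariable

variable {f W V U : ℝ → ℝ} {a b k C α μ θ : ℝ}

lemma hasDerivAt_add_mul_div {x u' v' : ℝ} {u v : ℝ → ℝ} (hu : HasDerivAt u u' x)
    (hv : HasDerivAt v v' x) (hx : x ≠ 0) :
    HasDerivAt (fun x ↦ u x + θ * v x / x) (u' + θ * v' / x - θ * v x / x ^ 2) x := by
  refine (hu.add ((hv.const_mul θ).div (hasDerivAt_id x) hx)).congr_deriv ?_
  simp only [id]
  field_simp
  ring

lemma eventually_const_mul_rpow_le_add_div (hθ : 0 < θ) (hθμ : θ * μ < 1) (hα : α < θ * k)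
    (hW : ∀ᶠ x in atTop, HasDerivAt W (V x) x) (hV : ∀ᶠ x in atTop, HasDerivAt V (U x) x)
    (hWpos : ∀ᶠ x in atTop, 0 < W x) (hVpos : ∀ᶠ x in atTop, 0 < V x)
    (hU : ∀ᶠ x in atTop, W x ≤ b * x ^ α → -μ * x * V x + k * W x ≤ U x) :
    ∀ᶠ x in atTop, b * x ^ α ≤ W x + θ * V x / x := by
  have hlarge : ∀ᶠ x : ℝ in atTop, θ * (1 + θ * k) ≤ (1 - θ * μ) * x ^ 2 :=
    ((tendsto_pow_atTop two_ne_zero).const_mul_atTop (sub_pos.2 hθμ)).eventually_ge_atTop _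
  refine eventually_const_mul_rpow_le_of_hasDerivAt hα
    (u' := fun x ↦ V x + θ * U x / x - θ * V x / x ^ 2) ?_ ?_ ?_
  · filter_upwards [hW, hV, eventually_gt_atTop 0] with x hWx hVx hx
    exact hasDerivAt_add_mul_div hWx hVx hx.ne'
  · filter_upwards [hWpos, hVpos, eventually_gt_atTop 0] with x hWx hVx hx
    positivity
  · filter_upwards [hVpos, hU, hlarge, eventually_gt_atTop 0] with x hVx hUx hlx hx hle
    have hWb : W x ≤ b * x ^ α := (le_add_of_nonneg_right (by positivity)).trans hle
    have hscaled : θ * (1 + θ * k) * (V x / x) ≤ (1 - θ * μ) * x ^ 2 * (V x / x) := by gcongr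
    calc θ * k * (W x + θ * V x / x)
        = θ * k * W x + θ * (1 + θ * k) * (V x / x) - θ * (V x / x) := by ring
      _ ≤ θ * k * W x + (1 - θ * μ) * x ^ 2 * (V x / x) - θ * (V x / x) := by gcongr
      _ = x * V x + θ * (-μ * x * V x + k * W x) - θ * (V x / x) := by field_simp; ring
      _ ≤ x * V x + θ * U x - θ * (V x / x) := by gcongr; exact hUx hWb
      _ = x * (V x + θ * U x / x - θ * V x / x ^ 2) := by field_simp

lemma eventually_const_mul_rpow_le_of_const_mul_rpow_le_hasDerivAt (hα : 0 < α + 1) (ha : 0 < a)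
    (hab : a < b) (hf : ∀ᶠ x in atTop, HasDerivAt f (W x) x) (hfpos : ∀ᶠ x in atTop, 0 < f x)
    (hW : ∀ᶠ x in atTop, b * x ^ α ≤ W x) :
    ∀ᶠ x in atTop, a / (α + 1) * x ^ (α + 1) ≤ f x := by
  have hexp : α + 1 < b / a * (α + 1) := lt_mul_of_one_lt_left hα ((one_lt_div ha).2 hab)
  refine eventually_const_mul_rpow_le_of_hasDerivAt hexp hf hfpos ?_
  filter_upwards [hW, eventually_gt_atTop 0] with x hWx hx hle
  calc b / a * (α + 1) * f x ≤ b / a * (α + 1) * (a / (α + 1) * x ^ (α + 1)) := by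
        have : 0 < b := ha.trans hab
        gcongr
    _ = x * (b * x ^ α) := by rw [rpow_add_one hx.ne']; field_simp
    _ ≤ x * W x := by gcongr

lemma eventually_const_mul_rpow_le_of_le_add_div (hα : 0 < α + 1) (hθ : 0 ≤ θ) (ha : 0 < a)
    (hab : a < b) (hf : ∀ᶠ x in atTop, HasDerivAt f (W x) x)
    (hW : ∀ᶠ x in atTop, HasDerivAt W (V x) x) (hfpos : ∀ᶠ x in atTop, 0 < f x)
    (hWpos : ∀ᶠ x in atTop, 0 < W x) (hWle : ∀ᶠ x in atTop, W x ≤ C * x ^ α)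
    (hle : ∀ᶠ x in atTop, b * x ^ α ≤ W x + θ * V x / x) :
    ∀ᶠ x in atTop, a / (α + 1) * x ^ (α + 1) ≤ f x := by
  obtain ⟨a₁, haa₁, ha₁b⟩ := exists_between hab
  obtain ⟨b₁, ha₁b₁, hb₁b⟩ := exists_between ha₁b
  have hdecay : ∀ ε > 0, ∀ᶠ x : ℝ in atTop, θ * C / x ^ 2 ≤ ε := fun ε hε ↦
    (tendsto_const_nhds.div_atTop (tendsto_pow_atTop two_ne_zero)).eventually_le_const hε
  have hF : ∀ᶠ x in atTop, a₁ / (α + 1) * x ^ (α + 1) ≤ f x + θ * W x / x := by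
    refine eventually_const_mul_rpow_le_of_const_mul_rpow_le_hasDerivAt hα (ha.trans haa₁) ha₁b₁
      (W := fun x ↦ W x + θ * V x / x - θ * W x / x ^ 2) ?_ ?_ ?_
    · filter_upwards [hf, hW, eventually_gt_atTop 0] with x hfx hWx hx
      exact hasDerivAt_add_mul_div hfx hWx hx.ne'
    · filter_upwards [hfpos, hWpos, eventually_gt_atTop 0] with x hfx hWx hx
      positivity
    · filter_upwards [hle, hWle, hdecay (b - b₁) (sub_pos.2 hb₁b), eventually_gt_atTop 0]
        with x hx hWx hdx hx0
      have : θ * W x / x ^ 2 ≤ (b - b₁) * x ^ α := calc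
        θ * W x / x ^ 2 ≤ θ * (C * x ^ α) / x ^ 2 := by gcongr
        _ = θ * C / x ^ 2 * x ^ α := by ring
        _ ≤ (b - b₁) * x ^ α := by gcongr
      linarith
  filter_upwards [hF, hWle, hdecay ((a₁ - a) / (α + 1)) (div_pos (sub_pos.2 haa₁) hα),
    eventually_gt_atTop 0] with x hFx hWx hdx hx
  have : θ * W x / x ≤ (a₁ - a) / (α + 1) * x ^ (α + 1) := calc
    θ * W x / x ≤ θ * (C * x ^ α) / x := by gcongr
    _ = θ * C / x ^ 2 * x ^ (α + 1) := by rw [rpow_add_one hx.ne']; field_simp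
    _ ≤ (a₁ - a) / (α + 1) * x ^ (α + 1) := by gcongr
  calc a / (α + 1) * x ^ (α + 1)
      = a₁ / (α + 1) * x ^ (α + 1) - (a₁ - a) / (α + 1) * x ^ (α + 1) := by ring
    _ ≤ f x := by linarith

end SlowVariable

section CriticalConstant

lemma rpow_add_mul_sub_le_rpow {p x y : ℝ} (hp : 1 ≤ p) (hx : 0 ≤ x) (hy : 0 < y) :
    y ^ p + p * y ^ (p - 1) * (x - y) ≤ x ^ p := by
  have hbernoulli := one_add_mul_self_le_rpow_one_add (s := x / y - 1)
    (by linarith [div_nonneg hx hy.le]) hp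
  rw [add_sub_cancel, div_rpow hx hy.le, le_div_iff₀ (rpow_pos_of_pos hy p)] at hbernoulli
  refine le_of_eq_of_le ?_ hbernoulli
  rw [rpow_sub_one hy.ne']
  field_simp

lemma mul_rpow_one_div_rpow {p b x : ℝ} (hp : p ≠ 0) (hb : 0 ≤ b) (hx : 0 ≤ x) :
    (b * x ^ (1 / p)) ^ p = b ^ p * x := by
  rw [mul_rpow hb (rpow_nonneg hx _), one_div, rpow_inv_rpow hx hp]

/-- The constant `C₀` of the asymptotic bound: `g = C₀` is the point where the coefficient
`ξ / 2 - λ q f' ^ (q - 1)` of `f''` in the differentiated equation equals `-ξ / 2`, where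
`f' = g ξ ^ (1 / (q - 1))`. -/
noncomputable def kpzC₀ (q lam : ℝ) : ℝ := (1 / (lam * q)) ^ (1 / (q - 1))

variable {q lam ξ w : ℝ}

lemma kpzC₀_pos (hq : 0 < q) (hlam : 0 < lam) : 0 < kpzC₀ q lam := by
  unfold kpzC₀; positivity

lemma mul_kpzC₀_rpow (hq : 1 < q) (hlam : 0 < lam) : lam * q * kpzC₀ q lam ^ (q - 1) = 1 := by
  have hq1 : q - 1 ≠ 0 := (sub_pos.2 hq).ne'
  rw [kpzC₀, one_div (q - 1), rpow_inv_rpow (by positivity) hq1]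
  field_simp

lemma mul_sub_kpzC₀_le_mul_rpow (hq : 1 < q) (hlam : 0 < lam) (hξ : 0 < ξ) (hw : 0 ≤ w) :
    ξ * (w - (1 - 1 / q) * (kpzC₀ q lam * ξ ^ (1 / (q - 1)))) ≤ lam * w ^ q := by
  have hC := kpzC₀_pos (zero_lt_one.trans hq) hlam
  set y := kpzC₀ q lam * ξ ^ (1 / (q - 1)) with hy
  have hypos : 0 < y := by positivity
  have hslope : lam * q * y ^ (q - 1) = ξ := by
    rw [hy, mul_rpow_one_div_rpow (sub_pos.2 hq).ne' hC.le hξ.le, ← mul_assoc,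
      mul_kpzC₀_rpow hq hlam, one_mul]
  have hval : y ^ q = y ^ (q - 1) * y := by rw [← rpow_add_one hypos.ne', sub_add_cancel]
  calc ξ * (w - (1 - 1 / q) * y) = lam * (y ^ q + q * y ^ (q - 1) * (w - y)) := by
        rw [hval, ← hslope]; field_simp; ring
    _ ≤ lam * w ^ q := by gcongr; exact rpow_add_mul_sub_le_rpow hq.le hw hypos

end CriticalConstant

/-- The derivative on the half line `[0, ∞)`, one-sided at `0`, in which the profile equation is
expressed. -/
noncomputable abbrev derivIci (f : ℝ → ℝ) : ℝ → ℝ := derivWithin f (Ici 0)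

namespace SolvesKPZProfile

variable {q lam a ξ : ℝ} {f : ℝ → ℝ}

lemma contDiffOn_deriv (h : SolvesKPZProfile q lam (Ici 0) f) :
    ContDiffOn ℝ 1 (derivIci f) (Ici 0) :=
  h.1.derivWithin (uniqueDiffOn_Ici 0) (by norm_num)

lemma hasDerivAt (h : SolvesKPZProfile q lam (Ici 0) f) (hξ : 0 < ξ) :
    HasDerivAt f (derivIci f ξ) ξ :=
  (h.1.differentiableOn two_ne_zero ξ hξ.le).hasDerivWithinAt.hasDerivAt (Ici_mem_nhds hξ)

lemma hasDerivAt_deriv (h : SolvesKPZProfile q lam (Ici 0) f) (hξ : 0 < ξ) :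
    HasDerivAt (derivIci f) (derivIci (derivIci f) ξ) ξ :=
  (h.contDiffOn_deriv.differentiableOn one_ne_zero ξ hξ.le).hasDerivWithinAt.hasDerivAt
    (Ici_mem_nhds hξ)

lemma continuousOn_secondDeriv (h : SolvesKPZProfile q lam (Ici 0) f) :
    ContinuousOn (derivIci (derivIci f)) (Ici 0) :=
  h.contDiffOn_deriv.continuousOn_derivWithin (uniqueDiffOn_Ici 0) le_rfl

lemma secondDeriv_eq (h : SolvesKPZProfile q lam (Ici 0) f) (hξ : ξ ∈ Ici 0) :
    derivIci (derivIci f) ξ =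
      1 / 2 * ξ * derivIci f ξ - lam * |derivIci f ξ| ^ q - (q - 2) / (2 * (q - 1)) * f ξ := by
  linarith [h.2 ξ hξ]

lemma secondDeriv_zero_pos (h : SolvesKPZProfile q lam (Ici 0) f) (hq : 2 < q)
    (hf' : derivIci f 0 = 0) (hf : f 0 < 0) : 0 < derivIci (derivIci f) 0 := by
  have hc : 0 < (q - 2) / (2 * (q - 1)) := div_pos (by linarith) (by linarith)
  rw [h.secondDeriv_eq self_mem_Ici, hf', abs_zero, zero_rpow (by linarith)]
  linarith [mul_neg_of_pos_of_neg hc hf]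

lemma hasDerivAt_secondDeriv (h : SolvesKPZProfile q lam (Ici 0) f) (hq : 1 < q) (hξ : 0 < ξ)
    (hW : 0 < derivIci f ξ) :
    HasDerivAt (derivIci (derivIci f))
      ((1 / 2 * ξ - lam * q * derivIci f ξ ^ (q - 1)) * derivIci (derivIci f) ξ +
        1 / (q - 1) / 2 * derivIci f ξ) ξ := by
  have hpow : HasDerivAt (fun x ↦ |derivIci f x| ^ q)
      (q * |derivIci f ξ| ^ (q - 2) * derivIci f ξ * derivIci (derivIci f) ξ) ξ :=
    (hasDerivAt_abs_rpow (derivIci f ξ) hq).comp ξ (h.hasDerivAt_deriv hξ)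
  have hrhs := ((((hasDerivAt_id ξ).const_mul (1 / 2 : ℝ)).mul (h.hasDerivAt_deriv hξ)).sub
    (hpow.const_mul lam)).sub ((h.hasDerivAt hξ).const_mul ((q - 2) / (2 * (q - 1))))
  have hode : derivIci (derivIci f) =ᶠ[𝓝 ξ] fun x ↦
      1 / 2 * x * derivIci f x - lam * |derivIci f x| ^ q - (q - 2) / (2 * (q - 1)) * f x := by
    filter_upwards [Ici_mem_nhds hξ] with x hx using h.secondDeriv_eq hx
  have hexp : |derivIci f ξ| ^ (q - 2) * derivIci f ξ = derivIci f ξ ^ (q - 1) := by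
    rw [abs_of_pos hW, ← rpow_add_one hW.ne']; ring_nf
  have hcoeff : 1 / (q - 1) / 2 = 1 / 2 - (q - 2) / (2 * (q - 1)) := by
    have : q - 1 ≠ 0 := (sub_pos.2 hq).ne'
    field_simp; ring
  refine (hrhs.congr_of_eventuallyEq hode).congr_deriv ?_
  rw [hcoeff, ← hexp, id]
  ring

lemma secondDeriv_pos (h : SolvesKPZProfile q lam (Ici 0) f) (hq : 1 < q)
    (hf' : 0 ≤ derivIci f 0) (hf'' : 0 < derivIci (derivIci f) 0) (hξ : 0 ≤ ξ) :
    0 < derivIci (derivIci f) ξ := by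
  refine pos_of_deriv_pos_of_eq_zero h.contDiffOn_deriv.continuousOn
    h.continuousOn_secondDeriv (fun x ↦ h.hasDerivAt_deriv) hf' hf'' (fun x hx hW hV ↦ ?_) hξ
  have : 0 < q - 1 := sub_pos.2 hq
  rw [(h.hasDerivAt_secondDeriv hq hx hW).deriv, hV, mul_zero, zero_add]
  positivity

lemma deriv_pos (h : SolvesKPZProfile q lam (Ici 0) f) (hq : 1 < q)
    (hf' : 0 ≤ derivIci f 0) (hf'' : 0 < derivIci (derivIci f) 0) (hξ : 0 < ξ) : 0 < derivIci f ξ :=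
  pos_of_hasDerivAt_pos hξ h.contDiffOn_deriv.continuousOn (fun _ ↦ h.hasDerivAt_deriv) hf'
    fun _ hx ↦ h.secondDeriv_pos hq hf' hf'' hx.1.le

lemma eventually_pos (h : SolvesKPZProfile q lam (Ici 0) f) (hq : 1 < q)
    (hf' : 0 ≤ derivIci f 0) (hf'' : 0 < derivIci (derivIci f) 0) : ∀ᶠ x in atTop, 0 < f x := by
  have hmono : MonotoneOn (derivIci f) (Ici 1) :=
    monotoneOn_of_hasDerivWithinAt_nonneg (convex_Ici 1)
      (h.contDiffOn_deriv.continuousOn.mono (Ici_subset_Ici.2 zero_le_one))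
      (fun x hx ↦ (h.hasDerivAt_deriv (one_pos.trans_le (interior_subset hx))).hasDerivWithinAt)
      (fun x hx ↦ (h.secondDeriv_pos hq hf' hf'' (one_pos.trans_le (interior_subset hx)).le).le)
  exact (tendsto_atTop_of_const_le_hasDerivAt (h.deriv_pos hq hf' hf'' one_pos)
    (fun x hx ↦ h.hasDerivAt (one_pos.trans_le hx))
    (fun x hx ↦ hmono self_mem_Ici hx hx)).eventually_gt_atTop 0

lemma deriv_le_of_const_mul_rpow_le (h : SolvesKPZProfile q lam (Ici 0) f) (hq : 2 < q)
    (hlam : 0 < lam) (hξ : 0 < ξ) (hW : 0 ≤ derivIci f ξ) (hV : 0 ≤ derivIci (derivIci f) ξ)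
    (ha : a ≤ kpzC₀ q lam)
    (hf : a / (1 / (q - 1) + 1) * ξ ^ (1 / (q - 1) + 1) ≤ f ξ) :
    derivIci f ξ ≤ (2 * kpzC₀ q lam - a) * ξ ^ (1 / (q - 1)) := by
  have hq1 : 0 < q - 1 := by linarith
  have htangent := mul_sub_kpzC₀_le_mul_rpow (one_lt_two.trans hq) hlam hξ hW
  have hode := h.secondDeriv_eq hξ.le
  rw [abs_of_nonneg hW] at hode
  set z := ξ ^ (1 / (q - 1)) with hz
  have hf_scaled : (1 / 2 - 1 / q) * a * (ξ * z) ≤ (q - 2) / (2 * (q - 1)) * f ξ := calc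
    (1 / 2 - 1 / q) * a * (ξ * z)
        = (q - 2) / (2 * (q - 1)) * (a / (1 / (q - 1) + 1) * ξ ^ (1 / (q - 1) + 1)) := by
          rw [rpow_add_one hξ.ne', ← hz]
          have : 1 + (q - 1) ≠ 0 := by linarith
          field_simp
          ring
    _ ≤ (q - 2) / (2 * (q - 1)) * f ξ :=
          mul_le_mul_of_nonneg_left hf (div_nonneg (by linarith) (by linarith))
  have hgap : 0 ≤ 1 / q * (kpzC₀ q lam - a) * z :=
    mul_nonneg (mul_nonneg (by positivity) (sub_nonneg.2 ha)) (by positivity)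
  have hbalance : ξ * (derivIci f ξ / 2) ≤
      ξ * ((1 - 1 / q) * (kpzC₀ q lam * z) - (1 / 2 - 1 / q) * a * z) := by linarith
  linarith [le_of_mul_le_mul_left hbalance hξ]

lemma eventually_const_mul_rpow_le_deriv_add_div (h : SolvesKPZProfile q lam (Ici 0) f)
    (hq : 1 < q) (hlam : 0 < lam) (hf' : 0 ≤ derivIci f 0) (hf'' : 0 < derivIci (derivIci f) 0)
    {b : ℝ} (hb : 0 < b) (hbC : b < kpzC₀ q lam) :
    ∃ θ > 0, ∀ᶠ x in atTop,
      b * x ^ (1 / (q - 1)) ≤ derivIci f x + θ * derivIci (derivIci f) x / x := by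
  have hq1 : 0 < q - 1 := sub_pos.2 hq
  have hWpos : ∀ᶠ x in atTop, 0 < derivIci f x :=
    (eventually_gt_atTop 0).mono fun _ ↦ h.deriv_pos hq hf' hf''
  set m := lam * q * b ^ (q - 1) with hm
  have hm0 : 0 < m := by positivity
  have hm1 : m < 1 := by
    rw [← mul_kpzC₀_rpow hq hlam, hm]
    gcongr
  refine ⟨2 / m, by positivity, eventually_const_mul_rpow_le_add_div (μ := m - 1 / 2)
    (k := 1 / (q - 1) / 2)
    (U := fun x ↦ (1 / 2 * x - lam * q * derivIci f x ^ (q - 1)) * derivIci (derivIci f) x +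
      1 / (q - 1) / 2 * derivIci f x) (by positivity) ?_ ?_
    ((eventually_gt_atTop 0).mono fun _ ↦ h.hasDerivAt_deriv) ?_ hWpos
    ((eventually_ge_atTop 0).mono fun _ ↦ h.secondDeriv_pos hq hf' hf'') ?_⟩
  · calc 2 / m * (m - 1 / 2) = 2 - 1 / m := by field_simp
      _ < 1 := by linarith [(one_lt_div hm0).2 hm1]
  · calc 1 / (q - 1) < 1 / m * (1 / (q - 1)) :=
          lt_mul_of_one_lt_left (by positivity) ((one_lt_div hm0).2 hm1)
      _ = 2 / m * (1 / (q - 1) / 2) := by ring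
  · filter_upwards [hWpos, eventually_gt_atTop 0] with x hWx hx
    exact h.hasDerivAt_secondDeriv hq hx hWx
  · filter_upwards [hWpos, eventually_gt_atTop 0] with x hWx hx hWb
    have hpow : lam * q * derivIci f x ^ (q - 1) ≤ m * x := calc
      lam * q * derivIci f x ^ (q - 1) ≤ lam * q * (b * x ^ (1 / (q - 1))) ^ (q - 1) := by gcongr
      _ = m * x := by rw [mul_rpow_one_div_rpow hq1.ne' hb.le hx.le, ← mul_assoc]
    have := h.secondDeriv_pos hq hf' hf'' hx.le
    gcongr
    linarith

lemma eventually_const_mul_rpow_le (h : SolvesKPZProfile q lam (Ici 0) f) (hq : 2 < q)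
    (hlam : 0 < lam) (hf' : 0 ≤ derivIci f 0) (hf'' : 0 < derivIci (derivIci f) 0) (ha : 0 < a)
    (haC : a < kpzC₀ q lam) :
    ∀ᶠ x in atTop, a / (1 / (q - 1) + 1) * x ^ (1 / (q - 1) + 1) ≤ f x := by
  have hq1 : 1 < q := by linarith
  have hα : 0 < 1 / (q - 1) := one_div_pos.2 (sub_pos.2 hq1)
  have hWpos : ∀ᶠ x in atTop, 0 < derivIci f x :=
    (eventually_gt_atTop 0).mono fun _ ↦ h.deriv_pos hq1 hf' hf''
  have hfpos := h.eventually_pos hq1 hf' hf''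
  obtain ⟨b, hab, hbC⟩ := exists_between haC
  obtain ⟨θ, hθ, hslow⟩ :=
    h.eventually_const_mul_rpow_le_deriv_add_div hq1 hlam hf' hf'' (ha.trans hab) hbC
  have hWle : ∀ᶠ x in atTop, derivIci f x ≤ (2 * kpzC₀ q lam - 0) * x ^ (1 / (q - 1)) := by
    filter_upwards [hWpos, hfpos, eventually_gt_atTop 0] with x hWx hfx hx
    exact h.deriv_le_of_const_mul_rpow_le hq hlam hx hWx.le
      (h.secondDeriv_pos hq1 hf' hf'' hx.le).le (ha.trans haC).le (by simpa using hfx.le)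
  exact eventually_const_mul_rpow_le_of_le_add_div (by linarith) hθ.le ha hab
    ((eventually_gt_atTop 0).mono fun _ ↦ h.hasDerivAt)
    ((eventually_gt_atTop 0).mono fun _ ↦ h.hasDerivAt_deriv) hfpos hWpos hWle hslow

lemma eventually_deriv_le (h : SolvesKPZProfile q lam (Ici 0) f) (hq : 2 < q)
    (hlam : 0 < lam) (hf' : 0 ≤ derivIci f 0) (hf'' : 0 < derivIci (derivIci f) 0)
    {K : ℝ} (hK : kpzC₀ q lam < K) :
    ∀ᶠ x in atTop, derivIci f x ≤ K * x ^ (1 / (q - 1)) := by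
  have hq1 : 1 < q := by linarith
  have hC : 0 < kpzC₀ q lam := kpzC₀_pos (by linarith) hlam
  obtain ⟨a, hKa, haC⟩ : ∃ a, max 0 (2 * kpzC₀ q lam - K) < a ∧ a < kpzC₀ q lam :=
    exists_between (max_lt hC (by linarith))
  obtain ⟨ha, hKa⟩ := max_lt_iff.1 hKa
  filter_upwards [h.eventually_const_mul_rpow_le hq hlam hf' hf'' ha haC,
    eventually_gt_atTop 0] with x hfx hx
  calc derivIci f x ≤ (2 * kpzC₀ q lam - a) * x ^ (1 / (q - 1)) :=
        h.deriv_le_of_const_mul_rpow_le hq hlam hx (h.deriv_pos hq1 hf' hf'' hx).le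
          (h.secondDeriv_pos hq1 hf' hf'' hx.le).le haC.le hfx
    _ ≤ K * x ^ (1 / (q - 1)) := by gcongr; linarith

end SolvesKPZProfile

lemma kpzG_le_iff {q K t : ℝ} {f : ℝ → ℝ} :
    kpzG q f t ≤ K ↔ derivIci f (exp t) ≤ K * exp t ^ (1 / (q - 1)) := by
  have hexp : exp (-t / (q - 1)) = (exp t ^ (1 / (q - 1)))⁻¹ := by
    rw [← exp_mul, ← exp_neg]; ring_nf
  rw [kpzG, hexp, inv_mul_le_iff₀ (by positivity), mul_comm K]

theorem kpz_g_limsup_general (q lam : ℝ) (hq : 2 < q) (hlam : 0 < lam) (f : ℝ → ℝ)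
    (hsol : SolvesKPZProfile q lam (Ici 0) f) (hf' : 0 ≤ derivIci f 0)
    (hf'' : 0 < derivIci (derivIci f) 0) :
    limsup (kpzG q f) atTop ≤ (1 / (lam * q)) ^ (1 / (q - 1)) := by
  have hpos : ∀ t, 0 ≤ kpzG q f t := fun t ↦
    mul_nonneg (exp_pos _).le (hsol.deriv_pos (by linarith) hf' hf'' (exp_pos t)).le
  have hcobdd : IsCoboundedUnder (· ≤ ·) atTop (kpzG q f) :=
    (isBoundedUnder_of ⟨0, hpos⟩).isCoboundedUnder_le
  refine le_of_forall_gt_imp_ge_of_dense fun K hK ↦ limsup_le_of_le hcobdd ?_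
  filter_upwards [tendsto_exp_atTop.eventually (hsol.eventually_deriv_le hq hlam hf' hf'' hK)]
    with t ht using kpzG_le_iff.2 ht

theorem kpz_g_limsup (q lam : ℝ) (hq : 2 < q) (hlam : 0 < lam)
    (f : ℝ → ℝ)
    (hsol : SolvesKPZProfile q lam (Set.Ici 0) f)
    (hf0 : f 0 = -1)
    (hf'0 : derivWithin f (Set.Ici 0) 0 = 0) :
    Filter.limsup (kpzG q f) atTop ≤ (1 / (lam * q)) ^ (1 / (q - 1)) := by
  exact kpz_g_limsup_general q lam hq hlam f hsol hf'0.ge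
    (hsol.secondDeriv_zero_pos hq hf'0 (by linarith))
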